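/- Let C be a class of binary classifiers on a countable domain X with VC dimension d ≥ 2, let n ≥ 1, T ≥ 1, δ ∈ (0,1], let P be a probability distribution on X, and set ξ := (2/n)·(d(T+1)·log₂(2n) + log₂(2/δ)). Then the probability over x ∼ P^n that there exist h ∈ C and c = (c_1,…,c_T) ∈ C^T with rej_P(S(h,c)) > ξ and rej_x(S(h,c)) = 0 is at most δ. -/

import Mathlib

open MeasureTheory

/-- A finite set `A` is shattered by `C` if every boolean labeling of `A` is
realized by some member of `C`. -/
def Shatters {X : Type*} (C : Set (X → Bool)) (A : Finset X) : Prop :=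
  ∀ b : X → Bool, ∃ g ∈ C, ∀ a ∈ A, g a = b a

/-- `C` has VC dimension `d`: some set of size `d` is shattered and no larger set is. -/
def VCDim {X : Type*} (C : Set (X → Bool)) (d : ℕ) : Prop :=
  (∃ A : Finset X, A.card = d ∧ Shatters C A) ∧ ∀ A : Finset X, Shatters C A → A.card ≤ d

/-!
The event says that the sample misses a disagreement set of large measure. The disagreement sets of
a class of VC dimension `d ≥ 2` have at most `(2n) ^ (d (T + 1))` traces on `2n` points, by the
Sauer–Shelah lemma, so the theorem is an `ε`-net bound for these sets. That bound is the
double-sample argument. If `x` misses a set of measure at least `2s / n`, then with probability at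
least `1/2` an independent second sample hits it at least `s` times. Conversely, exchanging the two
samples coordinatewise by independent fair coins preserves their joint law, and for each trace at
most a fraction `2 ^ (-s)` of the exchanges put at least `s` of its points into the second sample
and none into the first.
-/

section Growth

variable {X ι κ : Type*}

/-- The restrictions of the classifiers of `C` to a finite sequence of points `w`, whose maximal
number is the growth function of `C`. Points of `w` may repeat. -/
def restrictions (C : Set (X → Bool)) (w : ι → X) : Set (ι → Bool) :=
  (· ∘ w) '' C

/-- The traces of the sets of `𝒟` on a sequence of points `w`, recorded as sets of indices. -/
def traces (𝒟 : Set (Set X)) (w : ι → X) : Set (Set ι) :=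
  (w ⁻¹' ·) '' 𝒟

/-- The agreement set `S(h, c)` of a classifier `h` and a committee `c`. -/
def agreementSet (h : X → Bool) (c : κ → X → Bool) : Set X :=
  {a | ∀ j, c j a = h a}

/-- The rejection regions, i.e. the complements of the agreement sets, of all classifiers in `C`
and committees in `C` indexed by `κ`. -/
def disagreementSets (C : Set (X → Bool)) (κ : Type*) : Set (Set X) :=
  {D | ∃ h ∈ C, ∃ c : κ → X → Bool, (∀ j, c j ∈ C) ∧ (agreementSet h c)ᶜ = D}

lemma sum_choose_Iic_le_pow {m d : ℕ} (hm : 2 ≤ m) (hd : 2 ≤ d) :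
    ∑ k ∈ Finset.Iic d, m.choose k ≤ m ^ d := by
  rw [← Nat.range_succ_eq_Iic]
  induction d, hd using Nat.le_induction with
  | base =>
    have h_two : m.choose 2 * 2 = m * (m - 1) := by
      rw [Nat.choose_two_right, Nat.div_mul_cancel (Nat.even_mul_pred_self m).two_dvd]
    obtain ⟨k, rfl⟩ := Nat.exists_eq_add_of_le' hm
    simp only [Finset.sum_range_succ, Finset.sum_range_zero, Nat.choose_zero_right,
      Nat.choose_one_right]
    have : k + 2 - 1 = k + 1 := rfl
    nlinarith
  | succ d hd ih =>
    have h_choose : m.choose (d + 1) * 2 ≤ m ^ (d + 1) := calc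
      m.choose (d + 1) * 2 ≤ m.choose (d + 1) * (d + 1).factorial := by
        gcongr
        exact (Nat.factorial_two).symm.le.trans (Nat.factorial_le (by lia))
      _ = m.descFactorial (d + 1) := by rw [Nat.descFactorial_eq_factorial_mul_choose, mul_comm]
      _ ≤ m ^ (d + 1) := Nat.descFactorial_le_pow m (d + 1)
    have h_pow : m ^ d * 2 ≤ m ^ (d + 1) := by rw [pow_succ]; gcongr
    rw [Finset.sum_range_succ]
    lia

lemma Shatters.injOn_of_restrictions {C : Set (X → Bool)} {w : ι → X} {A : Finset ι}
    (hA : Shatters (restrictions C w) A) : Set.InjOn w A := by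
  classical
  intro p hp q hq hpq
  obtain ⟨_, ⟨g, -, rfl⟩, hg⟩ := hA fun i => decide (i = p)
  have hgp : g (w p) = true := by simpa using hg p hp
  exact (by simpa [← hpq, hgp] using hg q hq : q = p).symm

lemma Shatters.image_of_restrictions [DecidableEq X] {C : Set (X → Bool)} {w : ι → X}
    {A : Finset ι} (hA : Shatters (restrictions C w) A) : Shatters C (A.image w) := by
  intro b
  obtain ⟨_, ⟨g, hgC, rfl⟩, hg⟩ := hA (b ∘ w)
  exact ⟨g, hgC, by simpa using hg⟩

lemma ncard_le_sum_choose_of_shatters [Fintype ι] {C : Set (ι → Bool)} {d : ℕ}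
    (hC : ∀ A : Finset ι, Shatters C A → A.card ≤ d) :
    C.ncard ≤ ∑ k ∈ Finset.Iic d, (Fintype.card ι).choose k := by
  classical
  let supp : (ι → Bool) → Finset ι := fun g => {i | g i = true}
  have h_supp : supp.Injective := fun f g hfg => by
    ext1 i
    rw [Bool.eq_iff_iff]
    simpa [supp] using Finset.ext_iff.1 hfg i
  set 𝒜 : Finset (Finset ι) := C.toFinset.image supp
  have h_vc : 𝒜.vcDim ≤ d := Finset.sup_le fun A hA => hC A fun b => by
    obtain ⟨_, hu, h_inter⟩ := Finset.mem_shatterer.1 hA (A.filter_subset fun i => b i = true)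
    obtain ⟨g, hg, rfl⟩ := Finset.mem_image.1 hu
    refine ⟨g, Set.mem_toFinset.1 hg, fun i hi => ?_⟩
    rw [Bool.eq_iff_iff]
    simpa [supp, hi] using Finset.ext_iff.1 h_inter i
  calc C.ncard = 𝒜.card := by
        rw [Finset.card_image_of_injective _ h_supp, Set.ncard_eq_toFinset_card']
    _ ≤ 𝒜.shatterer.card := 𝒜.card_le_card_shatterer
    _ ≤ ∑ k ∈ Finset.Iic 𝒜.vcDim, (Fintype.card ι).choose k := Finset.card_shatterer_le_sum_vcDim
    _ ≤ ∑ k ∈ Finset.Iic d, (Fintype.card ι).choose k := by gcongr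

lemma ncard_restrictions_le_pow [Fintype ι] {C : Set (X → Bool)} {d : ℕ} (hd : 2 ≤ d)
    (hC : ∀ A : Finset X, Shatters C A → A.card ≤ d) (hι : 2 ≤ Fintype.card ι) (w : ι → X) :
    (restrictions C w).ncard ≤ Fintype.card ι ^ d := by
  classical
  refine (ncard_le_sum_choose_of_shatters fun A hA => ?_).trans (sum_choose_Iic_le_pow hι hd)
  exact Finset.card_image_of_injOn hA.injOn_of_restrictions ▸ hC _ hA.image_of_restrictions

lemma traces_disagreementSets (C : Set (X → Bool)) (w : ι → X) :
    traces (disagreementSets C κ) w = disagreementSets (restrictions C w) κ := by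
  apply Set.Subset.antisymm
  · rintro _ ⟨_, ⟨h, hh, c, hc, rfl⟩, rfl⟩
    exact ⟨h ∘ w, ⟨h, hh, rfl⟩, fun j => c j ∘ w, fun j => ⟨c j, hc j, rfl⟩, rfl⟩
  · rintro _ ⟨_, ⟨h, hh, rfl⟩, c, hc, rfl⟩
    choose g hg hgc using hc
    obtain rfl : (fun j => g j ∘ w) = c := funext hgc
    exact ⟨_, ⟨h, hh, g, hg, rfl⟩, rfl⟩

lemma ncard_disagreementSets_le [Fintype κ] {C : Set (X → Bool)} (hC : C.Finite) :
    (disagreementSets C κ).ncard ≤ C.ncard ^ (Fintype.card κ + 1) := by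
  have := hC.to_subtype
  let region : C × (κ → C) → Set X := fun p => (agreementSet p.1.1 fun j => (p.2 j).1)ᶜ
  have h_range : disagreementSets C κ ⊆ region '' Set.univ := by
    rintro _ ⟨h, hh, c, hc, rfl⟩
    exact ⟨(⟨h, hh⟩, fun j => ⟨c j, hc j⟩), trivial, rfl⟩
  calc (disagreementSets C κ).ncard ≤ (region '' Set.univ).ncard := Set.ncard_le_ncard h_range
    _ ≤ (Set.univ : Set (C × (κ → C))).ncard := Set.ncard_image_le
    _ = C.ncard ^ (Fintype.card κ + 1) := by
      rw [Set.ncard_univ, Nat.card_prod, Nat.card_fun, Nat.card_eq_fintype_card (α := κ),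
        Nat.card_coe_set_eq, pow_succ']

lemma ncard_traces_disagreementSets_le [Fintype ι] [Fintype κ] {C : Set (X → Bool)} {d : ℕ}
    (hd : 2 ≤ d) (hC : ∀ A : Finset X, Shatters C A → A.card ≤ d) (hι : 2 ≤ Fintype.card ι)
    (w : ι → X) :
    (traces (disagreementSets C κ) w).ncard ≤ Fintype.card ι ^ (d * (Fintype.card κ + 1)) := by
  rw [traces_disagreementSets, pow_mul]
  exact (ncard_disagreementSets_le (Set.toFinite _)).trans
    (Nat.pow_le_pow_left (ncard_restrictions_le_pow hd hC hι w) _)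

lemma measurableSet_of_mem_disagreementSets [MeasurableSpace X] [Countable κ]
    {C : Set (X → Bool)} (hC : ∀ h ∈ C, Measurable h) {D : Set X}
    (hD : D ∈ disagreementSets C κ) : MeasurableSet D := by
  obtain ⟨h, hh, c, hc, rfl⟩ := hD
  rw [agreementSet, Set.ofPred_forall]
  exact (MeasurableSet.iInter fun j => measurableSet_eq_fun (hC _ (hc j)) (hC h hh)).compl

end Growth

section Swapping

variable {X ι : Type*}

/-- The double-sample event: some set of `𝒟` is missed by the first sample but hit at least `s`
times by the second one. -/
def ghostEvent (𝒟 : Set (Set X)) (s : ℝ) : Set ((ι → X) × (ι → X)) :=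
  {z | ∃ D ∈ 𝒟, z.1 ⁻¹' D = ∅ ∧ s ≤ (z.2 ⁻¹' D).ncard}

/-- The double sample obtained from points `w` indexed by `ι × Bool` by putting `w (i, σ i)` in the
first sample and `w (i, !σ i)` in the second one, for every `i`. -/
def splitSample (w : ι × Bool → X) (σ : ι → Bool) : (ι → X) × (ι → X) :=
  (fun i => w (i, σ i), fun i => w (i, !σ i))

lemma splitSample_mem_ghostEvent_iff (𝒟 : Set (Set X)) (s : ℝ) (w : ι × Bool → X) (σ : ι → Bool) :
    splitSample w σ ∈ ghostEvent 𝒟 s ↔ ∃ E ∈ traces 𝒟 w, splitSample id σ ∈ ghostEvent {E} s := by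
  simp only [ghostEvent, traces, Set.mem_ofPred_eq, Set.mem_singleton_iff, exists_eq_left,
    Set.exists_mem_image]
  rfl

lemma ncard_setOf_eqOn_le [Finite ι] (τ : ι → Bool) (F : Set ι) :
    {σ : ι → Bool | Set.EqOn σ τ F}.ncard ≤ 2 ^ Fᶜ.ncard := by
  have h_inj : Set.InjOn (Fᶜ.domRestrict (π := fun _ => Bool)) {σ | Set.EqOn σ τ F} := by
    intro σ hσ σ' hσ' h
    ext1 i
    by_cases hi : i ∈ F
    · rw [hσ hi, hσ' hi]
    · exact congrFun h ⟨i, hi⟩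
  calc {σ : ι → Bool | Set.EqOn σ τ F}.ncard
      ≤ (Set.univ : Set (↥Fᶜ → Bool)).ncard :=
        Set.ncard_le_ncard_of_injOn _ (fun _ _ => Set.mem_univ _) h_inj
    _ = 2 ^ Fᶜ.ncard := by
      rw [Set.ncard_univ, Nat.card_fun, Nat.card_coe_set_eq, Nat.card_eq_fintype_card,
        Fintype.card_bool]

variable [Fintype ι]

/-- Once one admissible split `τ` is fixed, every other one agrees with it on the indices at which
`τ` puts a point of `E` in the second sample. -/
lemma ncard_splitSample_mem_ghostEvent_singleton_le (E : Set (ι × Bool)) (s : ℝ) :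
    ({σ : ι → Bool | splitSample id σ ∈ ghostEvent {E} s}.ncard : ℝ) ≤
      2 ^ Fintype.card ι * 2 ^ (-s) := by
  obtain h_empty | ⟨τ, hτ⟩ :=
    {σ : ι → Bool | splitSample id σ ∈ ghostEvent {E} s}.eq_empty_or_nonempty
  · rw [h_empty, Set.ncard_empty, Nat.cast_zero]
    positivity
  obtain ⟨_, h_eq, -, hs⟩ := hτ
  rw [Set.mem_singleton_iff.1 h_eq] at hs
  set F : Set ι := {i | (i, !τ i) ∈ E}
  have h_sub : {σ : ι → Bool | splitSample id σ ∈ ghostEvent {E} s} ⊆ {σ | Set.EqOn σ τ F} := by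
    rintro σ ⟨_, rfl, hσ, -⟩ i hi
    by_contra h_ne
    rw [Set.mem_ofPred_eq, ← Bool.eq_not_of_ne h_ne] at hi
    exact hσ.subset hi
  have h_card : (F.ncard : ℝ) + Fᶜ.ncard = Fintype.card ι := by
    exact_mod_cast (Set.ncard_add_ncard_compl F).trans Nat.card_eq_fintype_card
  calc ({σ : ι → Bool | splitSample id σ ∈ ghostEvent {E} s}.ncard : ℝ)
      ≤ 2 ^ Fᶜ.ncard := by
        exact_mod_cast (Set.ncard_le_ncard h_sub).trans (ncard_setOf_eqOn_le τ F)
    _ = 2 ^ (Fᶜ.ncard : ℝ) := (Real.rpow_natCast _ _).symm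
    _ ≤ 2 ^ (Fintype.card ι + -s : ℝ) := by
        apply Real.rpow_le_rpow_of_exponent_le one_le_two
        have : s ≤ F.ncard := hs
        linarith
    _ = 2 ^ Fintype.card ι * 2 ^ (-s) := by rw [Real.rpow_add two_pos, Real.rpow_natCast]

lemma ncard_splitSample_mem_ghostEvent_le (𝒟 : Set (Set X)) (s : ℝ) (w : ι × Bool → X) :
    ({σ : ι → Bool | splitSample w σ ∈ ghostEvent 𝒟 s}.ncard : ℝ) ≤
      2 ^ Fintype.card ι * ((traces 𝒟 w).ncard * 2 ^ (-s)) := by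
  classical
  have h_union : {σ : ι → Bool | splitSample w σ ∈ ghostEvent 𝒟 s} =
      ⋃ E ∈ (traces 𝒟 w).toFinset, {σ | splitSample id σ ∈ ghostEvent {E} s} := by
    ext σ
    simp [splitSample_mem_ghostEvent_iff 𝒟]
  calc ({σ : ι → Bool | splitSample w σ ∈ ghostEvent 𝒟 s}.ncard : ℝ)
      ≤ ∑ E ∈ (traces 𝒟 w).toFinset,
          ({σ : ι → Bool | splitSample id σ ∈ ghostEvent {E} s}.ncard : ℝ) := by
        rw [h_union]
        exact_mod_cast Finset.set_ncard_biUnion_le _ _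
    _ ≤ ∑ E ∈ (traces 𝒟 w).toFinset, (2 : ℝ) ^ Fintype.card ι * 2 ^ (-s) :=
        Finset.sum_le_sum fun E _ => ncard_splitSample_mem_ghostEvent_singleton_le E s
    _ = 2 ^ Fintype.card ι * ((traces 𝒟 w).ncard * 2 ^ (-s)) := by
        rw [Finset.sum_const, nsmul_eq_mul, ← Set.ncard_eq_toFinset_card']
        ring

end Swapping

section DoubleSample

variable {X ι : Type*} [MeasurableSpace X] [Fintype ι]

/-- The points of a sequence of pairs, indexed so that `splitSample` exchanges the coordinates of
the pairs selected by `σ`. -/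
def flattenPairs (z : ι → X × X) : ι × Bool → X :=
  fun p => bif p.2 then (z p.1).2 else (z p.1).1

lemma measurePreserving_splitSample_flattenPairs (P : ι → Measure X) [∀ i, SigmaFinite (P i)]
    (σ : ι → Bool) :
    MeasurePreserving (fun z => splitSample (flattenPairs z) σ)
      (Measure.pi fun i => (P i).prod (P i)) ((Measure.pi P).prod (Measure.pi P)) := by
  let exchange : Bool → X × X → X × X := fun b => bif b then Prod.swap else id
  have h_exchange (i : ι) :
      MeasurePreserving (exchange (σ i)) ((P i).prod (P i)) ((P i).prod (P i)) := by
    cases σ i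
    exacts [MeasurePreserving.id _, Measure.measurePreserving_swap]
  convert (measurePreserving_arrowProdEquivProdArrow X X ι P P).comp
    (measurePreserving_pi _ _ h_exchange) using 1
  funext z
  refine Prod.ext (funext fun i => ?_) (funext fun i => ?_) <;>
    cases h : σ i <;> simp [splitSample, flattenPairs, exchange, h,
      MeasurableEquiv.arrowProdEquivProdArrow, Equiv.arrowProdEquivProdArrow]

lemma measure_prod_pi_le_of_ncard_splitSample_le (P : ι → Measure X)
    [∀ i, IsProbabilityMeasure (P i)] {B : Set ((ι → X) × (ι → X))} (hB : MeasurableSet B)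
    {c : ENNReal}
    (h : ∀ w : ι × Bool → X,
      ({σ : ι → Bool | splitSample w σ ∈ B}.ncard : ENNReal) ≤ 2 ^ Fintype.card ι * c) :
    (Measure.pi P).prod (Measure.pi P) B ≤ c := by
  classical
  set ν : Measure (ι → X × X) := Measure.pi fun i => (P i).prod (P i)
  let event : (ι → Bool) → Set (ι → X × X) := fun σ => {z | splitSample (flattenPairs z) σ ∈ B}
  have h_event (σ : ι → Bool) : MeasurableSet (event σ) :=
    (measurePreserving_splitSample_flattenPairs P σ).measurable hB
  have h_count (z : ι → X × X) : ∑ σ, (event σ).indicator 1 z =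
      ({σ : ι → Bool | splitSample (flattenPairs z) σ ∈ B}.ncard : ENNReal) := by
    simp [Set.indicator_apply, event, Set.ncard_eq_toFinset_card']
  have h_average : 2 ^ Fintype.card ι * (Measure.pi P).prod (Measure.pi P) B ≤
      2 ^ Fintype.card ι * c := calc
    2 ^ Fintype.card ι * (Measure.pi P).prod (Measure.pi P) B = ∑ σ, ν (event σ) := by
      have h_eq (σ : ι → Bool) : ν (event σ) = (Measure.pi P).prod (Measure.pi P) B :=
        (measurePreserving_splitSample_flattenPairs P σ).measure_preimage hB.nullMeasurableSet
      simp [h_eq]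
    _ = ∫⁻ z, ∑ σ, (event σ).indicator 1 z ∂ν := by
      rw [lintegral_finsetSum _ fun σ _ => measurable_one.indicator (h_event σ)]
      simp only [lintegral_indicator_one (h_event _)]
    _ ≤ ∫⁻ _, 2 ^ Fintype.card ι * c ∂ν := lintegral_mono fun z => (h_count z).trans_le (h _)
    _ = 2 ^ Fintype.card ι * c := by simp
  exact (ENNReal.mul_le_mul_iff_right (by simp) (by simp)).1 h_average

lemma measure_ghostEvent_le (P : ι → Measure X) [∀ i, IsProbabilityMeasure (P i)]
    {𝒟 : Set (Set X)} {N : ℕ} (hN : ∀ w : ι × Bool → X, (traces 𝒟 w).ncard ≤ N) {s : ℝ}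
    (h_meas : MeasurableSet (ghostEvent (ι := ι) 𝒟 s)) :
    (Measure.pi P).prod (Measure.pi P) (ghostEvent 𝒟 s) ≤ ENNReal.ofReal (N * 2 ^ (-s)) := by
  refine measure_prod_pi_le_of_ncard_splitSample_le P h_meas fun w => ?_
  calc ({σ : ι → Bool | splitSample w σ ∈ ghostEvent 𝒟 s}.ncard : ENNReal)
      = ENNReal.ofReal {σ : ι → Bool | splitSample w σ ∈ ghostEvent 𝒟 s}.ncard :=
        (ENNReal.ofReal_natCast _).symm
    _ ≤ ENNReal.ofReal (2 ^ Fintype.card ι * (N * 2 ^ (-s))) := by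
        refine ENNReal.ofReal_le_ofReal ((ncard_splitSample_mem_ghostEvent_le 𝒟 s w).trans ?_)
        gcongr
        exact hN w
    _ = 2 ^ Fintype.card ι * ENNReal.ofReal (N * 2 ^ (-s)) := by
        rw [ENNReal.ofReal_mul (by positivity), ENNReal.ofReal_pow two_pos.le, ENNReal.ofReal_ofNat]

variable (P : Measure X) [IsProbabilityMeasure P]

/-- Markov's inequality for `2 ^ (-k)`, where `k` is the number of hits of `D`. -/
lemma measureReal_ncard_preimage_le_le {D : Set X} (hD : MeasurableSet D) (s : ℝ) :
    (Measure.pi fun _ : ι => P).real {y | ((y ⁻¹' D).ncard : ℝ) ≤ s} ≤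
      2 ^ s * Real.exp (-(Fintype.card ι * P.real D / 2)) := by
  classical
  let g : X → ℝ := fun a => 1 - D.indicator (fun _ => 1 / 2) a
  have h_prod (y : ι → X) : ∏ i, g (y i) = 2 ^ (-((y ⁻¹' D).ncard : ℝ)) := by
    have h_g (i : ι) : g (y i) = if i ∈ y ⁻¹' D then 2⁻¹ else 1 := by
      by_cases h : y i ∈ D <;> norm_num [g, h]
    simp_rw [h_g, Finset.prod_ite, Finset.prod_const, one_pow, mul_one]
    rw [Real.rpow_neg two_pos.le, Real.rpow_natCast, inv_pow, Set.ncard_eq_toFinset_card',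
      Set.filter_mem_univ_eq_toFinset]
  have h_g_int : Integrable g P :=
    (integrable_const _).sub ((integrable_const _).indicator hD)
  have h_g_integral : ∫ a, g a ∂P = 1 - P.real D / 2 := by
    rw [integral_sub (integrable_const _) ((integrable_const _).indicator hD),
      integral_indicator_const _ hD]
    simp [div_eq_mul_inv]
  have h_markov := mul_meas_ge_le_integral_of_nonneg
    (.of_forall fun y => by rw [h_prod]; exact (Real.rpow_pos_of_pos two_pos _).le)
    (Integrable.fintype_prod (μ := fun _ : ι => P) fun _ => h_g_int) ((2 : ℝ) ^ (-s))
  rw [integral_fintype_prod_eq_pow, h_g_integral] at h_markov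
  simp_rw [h_prod, Real.rpow_le_rpow_left_iff one_lt_two, neg_le_neg_iff] at h_markov
  rw [Real.rpow_neg two_pos.le, inv_mul_le_iff₀ (by positivity)] at h_markov
  refine h_markov.trans (mul_le_mul_of_nonneg_left ?_ (by positivity))
  calc (1 - P.real D / 2) ^ Fintype.card ι
      ≤ Real.exp (-(P.real D / 2)) ^ Fintype.card ι := by
        have : P.real D ≤ 1 := measureReal_le_one
        exact pow_le_pow_left₀ (by linarith) (Real.one_sub_le_exp_neg _) _
    _ = Real.exp (-(Fintype.card ι * P.real D / 2)) := by
        rw [← Real.exp_nat_mul]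
        ring_nf

lemma two_rpow_mul_exp_neg_le_half {s : ℝ} (hs : 3 ≤ s) : 2 ^ s * Real.exp (-s) ≤ 1 / 2 := calc
  2 ^ s * Real.exp (-s) = Real.exp (Real.log 2 * s - s) := by
    rw [Real.rpow_def_of_pos two_pos, ← Real.exp_add, sub_eq_add_neg]
  _ ≤ Real.exp (-Real.log 2) := by
    gcongr
    nlinarith [Real.log_two_lt_d9]
  _ = 1 / 2 := by rw [Real.exp_neg, Real.exp_log two_pos, one_div]

lemma half_le_measureReal_le_ncard_preimage {D : Set X} (hD : MeasurableSet D) {s : ℝ}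
    (hs : 3 ≤ s) (hsD : 2 * s ≤ Fintype.card ι * P.real D) :
    1 / 2 ≤ (Measure.pi fun _ : ι => P).real {y | s ≤ (y ⁻¹' D).ncard} := by
  set μ := Measure.pi fun _ : ι => P
  have h_few : μ.real {y | ((y ⁻¹' D).ncard : ℝ) ≤ s} ≤ 1 / 2 := calc
    μ.real {y | ((y ⁻¹' D).ncard : ℝ) ≤ s}
      ≤ 2 ^ s * Real.exp (-(Fintype.card ι * P.real D / 2)) :=
        measureReal_ncard_preimage_le_le P hD s
    _ ≤ 2 ^ s * Real.exp (-s) := by gcongr; linarith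
    _ ≤ 1 / 2 := two_rpow_mul_exp_neg_le_half hs
  have h_cover : 1 ≤ μ.real {y | s ≤ (y ⁻¹' D).ncard} +
      μ.real {y | ((y ⁻¹' D).ncard : ℝ) ≤ s} := by
    rw [← probReal_univ (μ := μ)]
    refine (measureReal_mono fun y _ => ?_).trans (measureReal_union_le _ _)
    exact le_total s _
  linarith

/-- The `ε`-net theorem, with `ε = 2 * s / Fintype.card ι`. -/
theorem measureReal_exists_preimage_eq_empty_le {𝒟 : Set (Set X)}
    (h𝒟 : ∀ D ∈ 𝒟, MeasurableSet D) {N : ℕ}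
    (hN : ∀ w : ι × Bool → X, (traces 𝒟 w).ncard ≤ N) {s : ℝ} (hs : 3 ≤ s)
    (h_meas : MeasurableSet (ghostEvent (ι := ι) 𝒟 s)) :
    (Measure.pi fun _ : ι => P).real
      {x | ∃ D ∈ 𝒟, 2 * s ≤ Fintype.card ι * P.real D ∧ x ⁻¹' D = ∅} ≤ 2 * (N * 2 ^ (-s)) := by
  set μ := Measure.pi fun _ : ι => P
  set A := {x : ι → X | ∃ D ∈ 𝒟, 2 * s ≤ Fintype.card ι * P.real D ∧ x ⁻¹' D = ∅}
  let ghost : (ι → X) → Set (ι → X) := fun x => Prod.mk x ⁻¹' ghostEvent 𝒟 s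
  have h_ghost : A ⊆ {x | ENNReal.ofReal (1 / 2) ≤ μ (ghost x)} := by
    rintro x ⟨D, hD, hsD, hx⟩
    refine ENNReal.ofReal_le_of_le_toReal ?_
    exact (half_le_measureReal_le_ncard_preimage P (h𝒟 D hD) hs hsD).trans
      (measureReal_mono fun y hy => ⟨D, hD, hx, hy⟩)
  have h_double : ENNReal.ofReal (1 / 2) * μ A ≤ ENNReal.ofReal (N * 2 ^ (-s)) := calc
    ENNReal.ofReal (1 / 2) * μ A
      ≤ ENNReal.ofReal (1 / 2) * μ {x | ENNReal.ofReal (1 / 2) ≤ μ (ghost x)} := by gcongr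
    _ ≤ ∫⁻ x, μ (ghost x) ∂μ :=
      mul_meas_ge_le_lintegral (measurable_measure_prodMk_left h_meas) _
    _ = μ.prod μ (ghostEvent 𝒟 s) := (Measure.prod_apply h_meas).symm
    _ ≤ ENNReal.ofReal (N * 2 ^ (-s)) := measure_ghostEvent_le _ hN h_meas
  have h_real : 1 / 2 * μ.real A ≤ N * 2 ^ (-s) := by
    have := ENNReal.toReal_mono ENNReal.ofReal_ne_top h_double
    rwa [ENNReal.toReal_mul, ENNReal.toReal_ofReal (by norm_num),
      ENNReal.toReal_ofReal (by positivity)] at this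
  linarith

end DoubleSample

lemma three_le_mul_logb_add_logb {d n T : ℕ} (hd : 2 ≤ d) (hn : 1 ≤ n) {δ : ℝ} (hδ0 : 0 < δ)
    (hδ1 : δ ≤ 1) :
    3 ≤ (d : ℝ) * ((T : ℝ) + 1) * Real.logb 2 (2 * n) + Real.logb 2 (2 / δ) := by
  have one_le_logb {x : ℝ} (hx : 2 ≤ x) : 1 ≤ Real.logb 2 x := by
    rwa [Real.le_logb_iff_rpow_le one_lt_two (by linarith), Real.rpow_one]
  have h_n : 1 ≤ Real.logb 2 (2 * n) := one_le_logb (by norm_cast; lia)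
  have h_δ : 1 ≤ Real.logb 2 (2 / δ) := one_le_logb (by rw [le_div_iff₀ hδ0]; linarith)
  have h_dT : (2 : ℝ) ≤ d * (T + 1) := by norm_cast; nlinarith
  nlinarith

lemma pow_mul_two_rpow_neg_logb {m : ℕ} {x δ : ℝ} (hx : 0 < x) (hδ : 0 < δ) :
    x ^ m * 2 ^ (-(m * Real.logb 2 x + Real.logb 2 (2 / δ))) = δ / 2 := by
  rw [Real.rpow_neg two_pos.le, Real.rpow_add two_pos, mul_comm (m : ℝ), Real.rpow_mul two_pos.le,
    Real.rpow_logb two_pos (by norm_num) hx, Real.rpow_logb two_pos (by norm_num) (by positivity),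
    Real.rpow_natCast]
  field_simp

theorem stmt9_general {X : Type*} [MeasurableSpace X]
    (C : Set (X → Bool)) (hCm : ∀ h ∈ C, Measurable h)
    (d : ℕ) (hd : 2 ≤ d) (hC : ∀ A : Finset X, Shatters C A → A.card ≤ d)
    (n T : ℕ) (hn : 1 ≤ n)
    (hG : ∀ s, MeasurableSet (ghostEvent (ι := Fin n) (disagreementSets C (Fin T)) s))
    (δ : ℝ) (hδ0 : 0 < δ) (hδ1 : δ ≤ 1)
    (P : Measure X) [IsProbabilityMeasure P] (ξ : ℝ)
    (hξ : ξ = (2 / (n : ℝ)) *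
      ((d : ℝ) * ((T : ℝ) + 1) * Real.logb 2 (2 * n) + Real.logb 2 (2 / δ))) :
    ((Measure.pi fun _ : Fin n => P)
      {x : Fin n → X | ∃ h ∈ C, ∃ c : Fin T → X → Bool, (∀ i, c i ∈ C) ∧
        ξ < (P {a : X | ∀ j, c j a = h a}ᶜ).toReal ∧
        (Set.ncard {i : Fin n | x i ∉ {a : X | ∀ j, c j a = h a}} : ℝ) / n = 0}).toReal
      ≤ δ := by
  set s := (d : ℝ) * ((T : ℝ) + 1) * Real.logb 2 (2 * n) + Real.logb 2 (2 / δ) with hs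
  have h_n : (n : ℝ) ≠ 0 := by positivity
  have h_nξ : n * ξ = 2 * s := by rw [hξ]; field_simp
  have h_traces (w : Fin n × Bool → X) :
      (traces (disagreementSets C (Fin T)) w).ncard ≤ (2 * n) ^ (d * (T + 1)) := by
    simpa [mul_comm n] using
      ncard_traces_disagreementSets_le (κ := Fin T) hd hC (by simp; lia) w
  have h_net := measureReal_exists_preimage_eq_empty_le P
    (fun D => measurableSet_of_mem_disagreementSets hCm) h_traces
    (three_le_mul_logb_add_logb hd hn hδ0 hδ1) (hG s)
  have h_bound : 2 * ((((2 * n) ^ (d * (T + 1)) : ℕ) : ℝ) * 2 ^ (-s)) = δ := by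
    have := pow_mul_two_rpow_neg_logb (m := d * (T + 1)) (x := 2 * n) (by positivity) hδ0
    push_cast at this ⊢
    rw [this]
    ring
  refine (measureReal_mono ?_).trans (h_net.trans_eq h_bound)
  rintro x ⟨h, hh, c, hc, h_large, h_missed⟩
  refine ⟨_, ⟨h, hh, c, hc, rfl⟩, ?_, ?_⟩
  · rw [← hs, Fintype.card_fin, ← h_nξ]
    exact mul_le_mul_of_nonneg_left h_large.le n.cast_nonneg
  · rwa [div_eq_zero_iff, or_iff_left h_n, Nat.cast_eq_zero, Set.ncard_eq_zero] at h_missed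

/-- for a class `C` of VC dimension `d ≥ 2`, `n ≥ 1`, `T ≥ 1`, `δ ∈ (0,1]`,
distribution `P`, and `ξ = (2/n)(d(T+1)log₂(2n) + log₂(2/δ))`: the probability over
`x ∼ Pⁿ` that some `h ∈ C`, `c ∈ C^T` have `rej_P(S(h,c)) > ξ` and `rej_x(S(h,c)) = 0`
is at most `δ`. -/
theorem stmt9 {X : Type*} [Countable X] [MeasurableSpace X] [MeasurableSingletonClass X]
    (C : Set (X → Bool)) (d : ℕ) (hd : 2 ≤ d) (hC : VCDim C d)
    (n T : ℕ) (hn : 1 ≤ n) (hT : 1 ≤ T)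
    (δ : ℝ) (hδ0 : 0 < δ) (hδ1 : δ ≤ 1)
    (P : Measure X) [IsProbabilityMeasure P] (ξ : ℝ)
    (hξ : ξ = (2 / (n : ℝ)) *
      ((d : ℝ) * ((T : ℝ) + 1) * Real.logb 2 (2 * n) + Real.logb 2 (2 / δ))) :
    ((Measure.pi fun _ : Fin n => P)
      {x : Fin n → X | ∃ h ∈ C, ∃ c : Fin T → X → Bool, (∀ i, c i ∈ C) ∧
        ξ < (P {a : X | ∀ j, c j a = h a}ᶜ).toReal ∧
        (Set.ncard {i : Fin n | x i ∉ {a : X | ∀ j, c j a = h a}} : ℝ) / n = 0}).toReal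
      ≤ δ := by
  exact stmt9_general C (fun h _ => measurable_of_countable h) d hd hC.2 n T hn
    (fun _ => MeasurableSet.of_discrete) δ hδ0 hδ1 P ξ hξ
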